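/- Let f : A → B be a morphism of DGAs over ℚ (a degree-preserving unital algebra homomorphism commuting with the differentials) such that the induced map H²(f) : H²(A) → H²(B) is an isomorphism. Then the map H²(f) ⊗ Λ²(P²H²(f)) restricts to a map D_A → D_B, and for every cochain choice (α_A, γ_A) on A there exists a cochain choice (α_B, γ_B) on B such that H⁸(f) ∘ 𝒫_A = 𝒫_B ∘ (D_A → D_B), where 𝒫_A : D_A → H⁸(A) and 𝒫_B : D_B → H⁸(B) are the maps induced by the restrictions of α_Aγ_A² and α_Bγ_B² respectively. -/

import Mathlib

/-!
Common constructions: for a `ℚ`-vector space `V`, the symmetric powers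
`P²V, P³V, P⁴V, P⁵V` (as `SqM V`, `CubM V`, `QuarM V`, `QuinM V`), built as iterated
quotients of tensor products, with the multiplication maps between them; the exterior
square `Λ²W` (as `AltM W`) with the wedge map; and the 5-linear map `⋆` (as `star5`).
-/

open TensorProduct

noncomputable section

variable (V W : Type) [AddCommGroup V] [Module ℚ V] [AddCommGroup W] [Module ℚ W]

/-- The relations defining the symmetric square `P²V` as a quotient of `V ⊗ V`. -/
def sqRel : Submodule ℚ (V ⊗[ℚ] V) :=
  Submodule.span ℚ {z | ∃ x y : V, z = x ⊗ₜ[ℚ] y - y ⊗ₜ[ℚ] x}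

/-- The symmetric square `P²V`. -/
abbrev SqM : Type := (V ⊗[ℚ] V) ⧸ sqRel V

/-- The product `V × V → P²V`, `(x, y) ↦ xy`. -/
def sqm : V →ₗ[ℚ] V →ₗ[ℚ] SqM V :=
  (TensorProduct.mk ℚ V V).compr₂ (sqRel V).mkQ

/-- The relations presenting the symmetric cube `P³V` as a quotient of `V ⊗ P²V`. -/
def cubRel : Submodule ℚ (V ⊗[ℚ] SqM V) :=
  Submodule.span ℚ {z | ∃ x y w : V, z = x ⊗ₜ[ℚ] sqm V y w - y ⊗ₜ[ℚ] sqm V x w}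

/-- The symmetric cube `P³V`. -/
abbrev CubM : Type := (V ⊗[ℚ] SqM V) ⧸ cubRel V

/-- The product `V × P²V → P³V`. -/
def mulC : V →ₗ[ℚ] SqM V →ₗ[ℚ] CubM V :=
  (TensorProduct.mk ℚ V (SqM V)).compr₂ (cubRel V).mkQ

/-- The relations presenting `P⁴V` as a quotient of `V ⊗ P³V`. -/
def quarRel : Submodule ℚ (V ⊗[ℚ] CubM V) :=
  Submodule.span ℚ {z | ∃ (x y : V) (u : SqM V), z = x ⊗ₜ[ℚ] mulC V y u - y ⊗ₜ[ℚ] mulC V x u}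

/-- The symmetric fourth power `P⁴V`. -/
abbrev QuarM : Type := (V ⊗[ℚ] CubM V) ⧸ quarRel V

/-- The product `V × P³V → P⁴V`. -/
def mulQ : V →ₗ[ℚ] CubM V →ₗ[ℚ] QuarM V :=
  (TensorProduct.mk ℚ V (CubM V)).compr₂ (quarRel V).mkQ

/-- The relations presenting `P⁵V` as a quotient of `V ⊗ P⁴V`. -/
def quinRel : Submodule ℚ (V ⊗[ℚ] QuarM V) :=
  Submodule.span ℚ {z | ∃ (x y : V) (c : CubM V), z = x ⊗ₜ[ℚ] mulQ V y c - y ⊗ₜ[ℚ] mulQ V x c}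

/-- The symmetric fifth power `P⁵V`. -/
abbrev QuinM : Type := (V ⊗[ℚ] QuarM V) ⧸ quinRel V

/-- The product `V × P⁴V → P⁵V`. -/
def mulQn : V →ₗ[ℚ] QuarM V →ₗ[ℚ] QuinM V :=
  (TensorProduct.mk ℚ V (QuarM V)).compr₂ (quinRel V).mkQ

/-- The relations defining the exterior square `Λ²W` as a quotient of `W ⊗ W`. -/
def altRel2 : Submodule ℚ (W ⊗[ℚ] W) :=
  Submodule.span ℚ {z | ∃ x : W, z = x ⊗ₜ[ℚ] x}

/-- The exterior square `Λ²W`. -/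
abbrev AltM : Type := (W ⊗[ℚ] W) ⧸ altRel2 W

/-- The wedge product `W × W → Λ²W`. -/
def wdg : W →ₗ[ℚ] W →ₗ[ℚ] AltM W :=
  (TensorProduct.mk ℚ W W).compr₂ (altRel2 W).mkQ

/-- The element `⋆(x₁,…,x₅) = Σ_{i ∈ ℤ/5} xᵢ ⊗ (x_{i+1}x_{i+2} ∧ x_{i+3}x_{i+4})`
of `V ⊗ Λ²(P²V)`. -/
def star5 (x₁ x₂ x₃ x₄ x₅ : V) : V ⊗[ℚ] AltM (SqM V) :=
    x₁ ⊗ₜ[ℚ] wdg (SqM V) (sqm V x₂ x₃) (sqm V x₄ x₅)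
  + x₂ ⊗ₜ[ℚ] wdg (SqM V) (sqm V x₃ x₄) (sqm V x₅ x₁)
  + x₃ ⊗ₜ[ℚ] wdg (SqM V) (sqm V x₄ x₅) (sqm V x₁ x₂)
  + x₄ ⊗ₜ[ℚ] wdg (SqM V) (sqm V x₅ x₁) (sqm V x₂ x₃)
  + x₅ ⊗ₜ[ℚ] wdg (SqM V) (sqm V x₁ x₂) (sqm V x₃ x₄)

/-- A differential graded algebra (DGA) over `ℚ`: an `ℕ`-graded, graded-commutative,
associative unital `ℚ`-algebra with a degree `+1` differential satisfying `d ∘ d = 0`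
and the graded Leibniz rule. -/
structure DGA where
  /-- The underlying type. -/
  carrier : Type
  [ringStr : Ring carrier]
  [algStr : Algebra ℚ carrier]
  /-- The grading `A = ⊕ᵢ Aⁱ`. -/
  grading : ℕ → Submodule ℚ carrier
  one_mem : (1 : carrier) ∈ grading 0
  mul_mem : ∀ {i j : ℕ} {a b : carrier}, a ∈ grading i → b ∈ grading j → a * b ∈ grading (i + j)
  /-- The grading really is a direct sum decomposition. -/
  internal : DirectSum.IsInternal grading
  /-- Graded commutativity. -/
  gcomm : ∀ {i j : ℕ} {a b : carrier}, a ∈ grading i → b ∈ grading j →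
    a * b = ((-1 : ℚ) ^ (i * j)) • (b * a)
  /-- The differential. -/
  d : carrier →ₗ[ℚ] carrier
  d_mem : ∀ {i : ℕ} {a : carrier}, a ∈ grading i → d a ∈ grading (i + 1)
  d_d : ∀ a : carrier, d (d a) = 0
  /-- The graded Leibniz rule. -/
  leibniz : ∀ {i : ℕ} {a : carrier} (b : carrier), a ∈ grading i →
    d (a * b) = d a * b + ((-1 : ℚ) ^ i) • (a * d b)

attribute [instance] DGA.ringStr DGA.algStr

namespace DGA

variable (A : DGA)

/-- The closed elements of degree `i`. -/
def Z (i : ℕ) : Submodule ℚ A.carrier := A.grading i ⊓ LinearMap.ker A.d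

/-- The exact elements of degree `i`, as a submodule of the closed ones. -/
def Bdry (i : ℕ) : Submodule ℚ (A.Z i) :=
  Submodule.comap (A.Z i).subtype (Submodule.map A.d (A.grading (i - 1)))

/-- Degree `i` cohomology of the DGA. -/
abbrev H (i : ℕ) : Type := A.Z i ⧸ A.Bdry i

/-- The projection from closed elements to cohomology classes. -/
def pr (i : ℕ) : A.Z i →ₗ[ℚ] A.H i := (A.Bdry i).mkQ

end DGA

/-!
Only the injectivity of `H²(f)` matters: over a field, a lift through a surjection that is already
prescribed on a subspace extends to the whole space. Applied to `Z²(B) → H²(B)` and the subspace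
`H²(A) ↪ H²(B)`, this gives `α_B` with `α_B ∘ H²(f) = f ∘ α_A`; applied to `d : B³ → d(B³)` and the
subspace `E_A ↪ E_B`, it gives `γ_B` whose restriction to `E_A` is `f ∘ γ_A`. For these choices
`f ∘ α_Aγ_A²` and the pullback of `α_Bγ_B²` agree already as cochains, on all of `H² ⊗ Λ²E_A`.
-/

section LinearLifting

variable {K M N E E' : Type*} [DivisionRing K] [AddCommGroup M] [Module K M]
  [AddCommGroup N] [Module K N] [AddCommGroup E] [Module K E] [AddCommGroup E'] [Module K E']

theorem exists_lift_extending {p : M →ₗ[K] N} (hp : Function.Surjective p)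
    {j : E →ₗ[K] E'} (hj : Function.Injective j) (g : E' →ₗ[K] N) (γ₀ : E →ₗ[K] M)
    (h : p ∘ₗ γ₀ = g ∘ₗ j) :
    ∃ γ : E' →ₗ[K] M, p ∘ₗ γ = g ∧ γ ∘ₗ j = γ₀ := by
  obtain ⟨s, hs⟩ := p.exists_rightInverse_of_surjective (LinearMap.range_eq_top.2 hp)
  obtain ⟨r, hr⟩ := j.exists_leftInverse_of_injective (LinearMap.ker_eq_bot.2 hj)
  refine ⟨γ₀ ∘ₗ r + s ∘ₗ g ∘ₗ (LinearMap.id - j ∘ₗ r), ?_, ?_⟩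
  · calc p ∘ₗ (γ₀ ∘ₗ r + s ∘ₗ g ∘ₗ (LinearMap.id - j ∘ₗ r))
        = (p ∘ₗ γ₀) ∘ₗ r + (p ∘ₗ s) ∘ₗ g ∘ₗ (LinearMap.id - j ∘ₗ r) := LinearMap.comp_add _ _ _
      _ = g := by
        rw [h, hs, LinearMap.id_comp, LinearMap.comp_sub, LinearMap.comp_id, LinearMap.comp_assoc,
          add_sub_cancel]
  · calc (γ₀ ∘ₗ r + s ∘ₗ g ∘ₗ (LinearMap.id - j ∘ₗ r)) ∘ₗ j
        = γ₀ ∘ₗ (r ∘ₗ j) + s ∘ₗ g ∘ₗ (j - j ∘ₗ (r ∘ₗ j)) := rfl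
      _ = γ₀ := by
        rw [hr, LinearMap.comp_id, LinearMap.comp_id, sub_self, LinearMap.comp_zero,
          LinearMap.comp_zero, add_zero]

theorem exists_primitive_extending (d : M →ₗ[K] N) (W : Submodule K M)
    {j : E →ₗ[K] E'} (hj : Function.Injective j) (g : E' →ₗ[K] N) (hg : ∀ e, g e ∈ W.map d)
    (γ₀ : E →ₗ[K] M) (hγ₀ : ∀ e, γ₀ e ∈ W) (hd : ∀ e, d (γ₀ e) = g (j e)) :
    ∃ γ : E' →ₗ[K] M, (∀ e, γ e ∈ W) ∧ (∀ e, d (γ e) = g e) ∧ ∀ e, γ (j e) = γ₀ e := by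
  obtain ⟨γ, hdγ, hγj⟩ := exists_lift_extending (d.submoduleMap_surjective W) hj
    (g.codRestrict (W.map d) hg) (γ₀.codRestrict W hγ₀) (LinearMap.ext fun e => Subtype.ext (hd e))
  exact ⟨W.subtype ∘ₗ γ, fun e => (γ e).2,
    fun e => congrArg Subtype.val (LinearMap.congr_fun hdγ e),
    fun e => congrArg Subtype.val (LinearMap.congr_fun hγj e)⟩

end LinearLifting

section Powers

variable {V W} {Q N : Type} [AddCommGroup Q] [Module ℚ Q] [AddCommGroup N] [Module ℚ N]

theorem sqm_comm (x y : V) : sqm V x y = sqm V y x :=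
  (Submodule.Quotient.eq (sqRel V)).2 (Submodule.subset_span ⟨x, y, rfl⟩)

theorem mulC_left_comm (x y z : V) : mulC V x (sqm V y z) = mulC V y (sqm V x z) :=
  (Submodule.Quotient.eq (cubRel V)).2 (Submodule.subset_span ⟨x, y, z, rfl⟩)

theorem wdg_self (x : W) : wdg W x x = 0 :=
  (Submodule.Quotient.mk_eq_zero (altRel2 W)).2 (Submodule.subset_span ⟨x, rfl⟩)

namespace SqM

theorem hom_ext {g h : SqM V →ₗ[ℚ] N} (H : ∀ x y, g (sqm V x y) = h (sqm V x y)) : g = h :=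
  Submodule.linearMap_qext _ (TensorProduct.ext' H)

/-- The linear map out of `P²V` induced by a symmetric bilinear map. -/
def lift (b : V →ₗ[ℚ] V →ₗ[ℚ] N) (hb : ∀ x y, b x y = b y x) : SqM V →ₗ[ℚ] N :=
  (sqRel V).liftQ (TensorProduct.lift b) <| Submodule.span_le.2 <| by
    rintro _ ⟨x, y, rfl⟩
    simp [hb x y]

@[simp]
theorem lift_sqm (b : V →ₗ[ℚ] V →ₗ[ℚ] N) (hb : ∀ x y, b x y = b y x) (x y : V) :
    lift b hb (sqm V x y) = b x y :=
  TensorProduct.lift.tmul x y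

/-- The functorial map `P²f : P²V → P²W`. -/
def map (f : V →ₗ[ℚ] W) : SqM V →ₗ[ℚ] SqM W :=
  lift ((sqm W).compl₁₂ f f) fun x y => sqm_comm (f x) (f y)

@[simp]
theorem map_sqm (f : V →ₗ[ℚ] W) (x y : V) : map f (sqm V x y) = sqm W (f x) (f y) :=
  lift_sqm _ _ x y

theorem map_injective {f : V →ₗ[ℚ] W} (hf : Function.Injective f) :
    Function.Injective (map f) := by
  obtain ⟨r, hr⟩ := f.exists_leftInverse_of_injective (LinearMap.ker_eq_bot.2 hf)
  have hrf : ∀ x, r (f x) = x := LinearMap.congr_fun hr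
  have hmap : map r ∘ₗ map f = LinearMap.id := hom_ext fun x y => by simp [hrf]
  exact Function.LeftInverse.injective (LinearMap.congr_fun hmap)

end SqM

namespace CubM

/-- The functorial map `P³f : P³V → P³W`. -/
def map (f : V →ₗ[ℚ] W) : CubM V →ₗ[ℚ] CubM W :=
  (cubRel V).liftQ (TensorProduct.lift ((mulC W).compl₁₂ f (SqM.map f))) <|
    Submodule.span_le.2 <| by
      rintro _ ⟨x, y, z, rfl⟩
      simp [mulC_left_comm (f x)]

@[simp]
theorem map_mulC (f : V →ₗ[ℚ] W) (x : V) (u : SqM V) :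
    map f (mulC V x u) = mulC W (f x) (SqM.map f u) :=
  TensorProduct.lift.tmul (f' := (mulC W).compl₁₂ f (SqM.map f)) x u

end CubM

namespace AltM

theorem hom_ext {g h : AltM W →ₗ[ℚ] N} (H : ∀ x y, g (wdg W x y) = h (wdg W x y)) : g = h :=
  Submodule.linearMap_qext _ (TensorProduct.ext' H)

theorem tensor_hom_ext {g h : Q ⊗[ℚ] AltM W →ₗ[ℚ] N}
    (H : ∀ q x y, g (q ⊗ₜ wdg W x y) = h (q ⊗ₜ wdg W x y)) : g = h :=
  TensorProduct.ext <| LinearMap.ext fun q => hom_ext (H q)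

theorem tensor_sqm_hom_ext {g h : Q ⊗[ℚ] AltM (SqM V) →ₗ[ℚ] N}
    (H : ∀ q x y z w, g (q ⊗ₜ wdg (SqM V) (sqm V x y) (sqm V z w))
      = h (q ⊗ₜ wdg (SqM V) (sqm V x y) (sqm V z w))) : g = h := by
  let bilin (k : Q ⊗[ℚ] AltM (SqM V) →ₗ[ℚ] N) (q : Q) : SqM V →ₗ[ℚ] SqM V →ₗ[ℚ] N :=
    (wdg (SqM V)).compr₂ (k ∘ₗ TensorProduct.mk ℚ Q _ q)
  have hbilin : ∀ q, bilin g q = bilin h q := fun q =>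
    SqM.hom_ext fun x y => SqM.hom_ext fun z w => H q x y z w
  exact tensor_hom_ext fun q u v => LinearMap.congr_fun₂ (hbilin q) u v

/-- The linear map out of `Λ²W` induced by an alternating bilinear map. -/
def lift (b : W →ₗ[ℚ] W →ₗ[ℚ] N) (hb : ∀ x, b x x = 0) : AltM W →ₗ[ℚ] N :=
  (altRel2 W).liftQ (TensorProduct.lift b) <| Submodule.span_le.2 <| by
    rintro _ ⟨x, rfl⟩
    simp [hb x]

@[simp]
theorem lift_wdg (b : W →ₗ[ℚ] W →ₗ[ℚ] N) (hb : ∀ x, b x x = 0) (x y : W) :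
    lift b hb (wdg W x y) = b x y :=
  TensorProduct.lift.tmul x y

/-- The functorial map `Λ²f : Λ²V → Λ²W`. -/
def map (f : V →ₗ[ℚ] W) : AltM V →ₗ[ℚ] AltM W :=
  lift ((wdg W).compl₁₂ f f) fun x => wdg_self (f x)

@[simp]
theorem map_wdg (f : V →ₗ[ℚ] W) (x y : V) : map f (wdg V x y) = wdg W (f x) (f y) :=
  lift_wdg _ _ x y

theorem map_injective {f : V →ₗ[ℚ] W} (hf : Function.Injective f) :
    Function.Injective (map f) := by
  obtain ⟨r, hr⟩ := f.exists_leftInverse_of_injective (LinearMap.ker_eq_bot.2 hf)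
  have hrf : ∀ x, r (f x) = x := LinearMap.congr_fun hr
  have hmap : map r ∘ₗ map f = LinearMap.id := hom_ext fun x y => by simp [hrf]
  exact Function.LeftInverse.injective (LinearMap.congr_fun hmap)

end AltM

/-- The map `V ⊗ Λ²(P²V) → W ⊗ Λ²(P²W)` induced by `f`; for `f = H²(f)` this is the map which
restricts to `D_A → D_B`. -/
def tensorAltSqMap (f : V →ₗ[ℚ] W) : V ⊗[ℚ] AltM (SqM V) →ₗ[ℚ] W ⊗[ℚ] AltM (SqM W) :=
  TensorProduct.map f (AltM.map (SqM.map f))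

@[simp]
theorem tensorAltSqMap_tmul_wdg (f : V →ₗ[ℚ] W) (q : V) (u v : SqM V) :
    tensorAltSqMap f (q ⊗ₜ wdg (SqM V) u v)
      = f q ⊗ₜ wdg (SqM W) (SqM.map f u) (SqM.map f v) := by
  rw [tensorAltSqMap, TensorProduct.map_tmul, AltM.map_wdg]

theorem eq_tensorAltSqMap {f : V →ₗ[ℚ] W} {F : V ⊗[ℚ] AltM (SqM V) →ₗ[ℚ] W ⊗[ℚ] AltM (SqM W)}
    (hF : ∀ q x y z w, F (q ⊗ₜ wdg (SqM V) (sqm V x y) (sqm V z w))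
      = f q ⊗ₜ wdg (SqM W) (sqm W (f x) (f y)) (sqm W (f z) (f w))) :
    F = tensorAltSqMap f :=
  AltM.tensor_sqm_hom_ext fun q x y z w => by simp [hF]

/-- The inclusion `Q ⊗ Λ²E → Q ⊗ Λ²W` of a subspace `E ⊆ W`. -/
def tensorAltSubtype (Q : Type) [AddCommGroup Q] [Module ℚ Q] (E : Submodule ℚ W) :
    Q ⊗[ℚ] AltM E →ₗ[ℚ] Q ⊗[ℚ] AltM W :=
  (AltM.map E.subtype).lTensor Q

theorem eq_tensorAltSubtype {E : Submodule ℚ W} {ι : Q ⊗[ℚ] AltM E →ₗ[ℚ] Q ⊗[ℚ] AltM W}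
    (hι : ∀ q (e e' : E), ι (q ⊗ₜ wdg E e e') = q ⊗ₜ wdg W (e : W) (e' : W)) :
    ι = tensorAltSubtype Q E :=
  AltM.tensor_hom_ext fun q e e' => by simp [hι, tensorAltSubtype]

theorem tensorAltSubtype_injective (E : Submodule ℚ W) :
    Function.Injective (tensorAltSubtype Q E) :=
  Module.Flat.lTensor_preserves_injective_linearMap _ (AltM.map_injective E.subtype_injective)

theorem tensorAltSubtype_map_restrict {f : V →ₗ[ℚ] W} {E : Submodule ℚ (SqM V)}
    {E' : Submodule ℚ (SqM W)} (hE : ∀ e ∈ E, SqM.map f e ∈ E') (t : V ⊗[ℚ] AltM E) :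
    tensorAltSubtype W E' (TensorProduct.map f (AltM.map ((SqM.map f).restrict hE)) t)
      = tensorAltSqMap f (tensorAltSubtype V E t) := by
  have hcomp : tensorAltSubtype W E' ∘ₗ
      TensorProduct.map f (AltM.map ((SqM.map f).restrict hE))
      = tensorAltSqMap f ∘ₗ tensorAltSubtype V E :=
    AltM.tensor_hom_ext fun q e e' => by simp [tensorAltSubtype]
  exact LinearMap.congr_fun hcomp t

/-- `m` is the map `V ⊗ Λ²(P²V) → P³V ⊗ P²V` with `m(q ⊗ (u ∧ v)) = (qu) ⊗ v − (qv) ⊗ u`. -/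
def IsKoszulMap (m : V ⊗[ℚ] AltM (SqM V) →ₗ[ℚ] CubM V ⊗[ℚ] SqM V) : Prop :=
  ∀ q u v, m (q ⊗ₜ wdg (SqM V) u v) = mulC V q u ⊗ₜ v - mulC V q v ⊗ₜ u

theorem IsKoszulMap.natural {mV : V ⊗[ℚ] AltM (SqM V) →ₗ[ℚ] CubM V ⊗[ℚ] SqM V}
    {mW : W ⊗[ℚ] AltM (SqM W) →ₗ[ℚ] CubM W ⊗[ℚ] SqM W} (hV : IsKoszulMap mV)
    (hW : IsKoszulMap mW) (f : V →ₗ[ℚ] W) (t : V ⊗[ℚ] AltM (SqM V)) :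
    mW (tensorAltSqMap f t) = TensorProduct.map (CubM.map f) (SqM.map f) (mV t) := by
  have hcomp : mW ∘ₗ tensorAltSqMap f = TensorProduct.map (CubM.map f) (SqM.map f) ∘ₗ mV :=
    AltM.tensor_hom_ext fun q u v => by simp [hV q u v, hW (f q)]
  exact LinearMap.congr_fun hcomp t

/-- The map `αγ² : Q ⊗ Λ²E → R`, `q ⊗ (e ∧ e') ↦ α(q)γ(e)γ(e')`, for linear maps `α` and `γ` to an
algebra `R` such that `γ` takes values of square zero. -/
def tensorAltMul {R : Type} [Ring R] [Algebra ℚ R] (α : Q →ₗ[ℚ] R) (γ : W →ₗ[ℚ] R)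
    (hγ : ∀ e, γ e * γ e = 0) : Q ⊗[ℚ] AltM W →ₗ[ℚ] R :=
  TensorProduct.lift <|
    (LinearMap.mul ℚ R).compl₁₂ α
      (AltM.lift ((LinearMap.mul ℚ R).compl₁₂ γ γ) fun e => by simpa using hγ e)

theorem tensorAltMul_tmul_wdg {R : Type} [Ring R] [Algebra ℚ R] (α : Q →ₗ[ℚ] R) (γ : W →ₗ[ℚ] R)
    (hγ : ∀ e, γ e * γ e = 0) (q : Q) (e e' : W) :
    tensorAltMul α γ hγ (q ⊗ₜ wdg W e e') = α q * (γ e * γ e') := by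
  simp [tensorAltMul]

theorem eq_tensorAltMul {R : Type} [Ring R] [Algebra ℚ R] {α : Q →ₗ[ℚ] R} {γ : W →ₗ[ℚ] R}
    (hγ : ∀ e, γ e * γ e = 0) {Φ : Q ⊗[ℚ] AltM W →ₗ[ℚ] R}
    (hΦ : ∀ q e e', Φ (q ⊗ₜ wdg W e e') = α q * (γ e * γ e')) :
    Φ = tensorAltMul α γ hγ :=
  AltM.tensor_hom_ext fun q e e' => by rw [hΦ, tensorAltMul_tmul_wdg]

theorem tensorAltMul_map {Q' R R' : Type} [AddCommGroup Q'] [Module ℚ Q'] [Ring R] [Algebra ℚ R]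
    [Ring R'] [Algebra ℚ R'] {f : R →ₐ[ℚ] R'} {φ : Q →ₗ[ℚ] Q'} {j : V →ₗ[ℚ] W}
    {α : Q →ₗ[ℚ] R} {α' : Q' →ₗ[ℚ] R'} (hα : ∀ q, α' (φ q) = f (α q))
    {γ : V →ₗ[ℚ] R} {γ' : W →ₗ[ℚ] R'} (hγ : ∀ e, γ' (j e) = f (γ e))
    (hγsq : ∀ e, γ e * γ e = 0) (hγ'sq : ∀ e, γ' e * γ' e = 0) (t : Q ⊗[ℚ] AltM V) :
    tensorAltMul α' γ' hγ'sq (TensorProduct.map φ (AltM.map j) t)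
      = f (tensorAltMul α γ hγsq t) := by
  have hcomp : tensorAltMul α' γ' hγ'sq ∘ₗ TensorProduct.map φ (AltM.map j)
      = f.toLinearMap ∘ₗ tensorAltMul α γ hγsq :=
    AltM.tensor_hom_ext fun q e e' => by simp [tensorAltMul_tmul_wdg, hα, hγ]
  exact LinearMap.congr_fun hcomp t

end Powers

namespace DGA

variable {V W} {A B : DGA} {i j : ℕ}

theorem pr_eq_zero_iff {z : A.Z i} :
    A.pr i z = 0 ↔ (z : A.carrier) ∈ (A.grading (i - 1)).map A.d :=
  Submodule.Quotient.mk_eq_zero (A.Bdry i)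

theorem mul_mem_Z {a b : A.carrier} (ha : a ∈ A.Z i) (hb : b ∈ A.Z j) : a * b ∈ A.Z (i + j) := by
  have hda : A.d a = 0 := ha.2
  have hdb : A.d b = 0 := hb.2
  exact ⟨A.mul_mem ha.1 hb.1, show A.d (a * b) = 0 by
    rw [A.leibniz b ha.1, hda, hdb, zero_mul, mul_zero, smul_zero, add_zero]⟩

theorem mul_comm_of_even (hi : Even i) {a b : A.carrier} (ha : a ∈ A.grading i)
    (hb : b ∈ A.grading j) : a * b = b * a := by
  rw [A.gcomm ha hb, (hi.mul_right j).neg_one_pow, one_smul]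

theorem mul_self_eq_zero_of_odd (hi : Odd i) {a : A.carrier} (ha : a ∈ A.grading i) :
    a * a = 0 := by
  have hneg : a * a = -(a * a) := by
    conv_lhs => rw [A.gcomm ha ha, (hi.mul hi).neg_one_pow, neg_one_smul]
  have : IsAddTorsionFree A.carrier := .of_module_rat _
  exact self_eq_neg.1 hneg

/-- The map `α² : P²V → Z²ⁱ`, `xy ↦ α(x)α(y)`, for a linear map `α : V → Zⁱ` with `i` even. -/
def cochainSq (hi : Even i) (α : V →ₗ[ℚ] A.Z i) : SqM V →ₗ[ℚ] A.Z (i + i) :=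
  SqM.lift
    (LinearMap.mk₂ ℚ (fun x y => ⟨(α x : A.carrier) * α y, mul_mem_Z (α x).2 (α y).2⟩)
      (fun x y z => Subtype.ext (by simp [add_mul]))
      (fun c x y => Subtype.ext (by simp))
      (fun x y z => Subtype.ext (by simp [mul_add]))
      (fun c x y => Subtype.ext (by simp)))
    fun x y => Subtype.ext (mul_comm_of_even hi (α x).2.1 (α y).2.1)

theorem coe_cochainSq_sqm (hi : Even i) (α : V →ₗ[ℚ] A.Z i) (x y : V) :
    (cochainSq hi α (sqm V x y) : A.carrier) = α x * α y :=
  congrArg Subtype.val (SqM.lift_sqm _ _ x y)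

theorem eq_cochainSq (hi : Even i) {α : V →ₗ[ℚ] A.Z i} {αsq : SqM V →ₗ[ℚ] A.Z (i + i)}
    (hαsq : ∀ (x y : V) (w : A.Z (i + i)),
      (w : A.carrier) = (α x : A.carrier) * (α y : A.carrier) → αsq (sqm V x y) = w) :
    αsq = cochainSq hi α :=
  SqM.hom_ext fun x y => hαsq x y _ (coe_cochainSq_sqm hi α x y)

theorem cup_eq_pr_comp_cochainSq (hi : Even i) {cup : SqM (A.H i) →ₗ[ℚ] A.H (i + i)}
    (hcup : ∀ (x y : A.Z i) (w : A.Z (i + i)), (w : A.carrier) = (x : A.carrier) * (y : A.carrier) →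
      cup (sqm (A.H i) (A.pr i x) (A.pr i y)) = A.pr (i + i) w)
    {α : A.H i →ₗ[ℚ] A.Z i} (hα : ∀ h, A.pr i (α h) = h) :
    cup = A.pr (i + i) ∘ₗ cochainSq hi α :=
  SqM.hom_ext fun x y => by
    simpa only [hα] using! hcup (α x) (α y) _ (coe_cochainSq_sqm hi α x y)

/-- A morphism of DGAs: an algebra homomorphism which preserves degrees and commutes with the
differentials. -/
structure IsMorphism (f : A.carrier →ₐ[ℚ] B.carrier) : Prop where
  map_d : ∀ a, f (A.d a) = B.d (f a)
  map_mem : ∀ i, ∀ a ∈ A.grading i, f a ∈ B.grading i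

namespace IsMorphism

variable {f : A.carrier →ₐ[ℚ] B.carrier}

/-- The map induced by a morphism of DGAs on closed elements. -/
def mapZ (hf : IsMorphism f) (i : ℕ) : A.Z i →ₗ[ℚ] B.Z i :=
  f.toLinearMap.restrict fun a ha => by
    have hda : A.d a = 0 := ha.2
    exact ⟨hf.map_mem i a ha.1, show B.d (f a) = 0 by rw [← hf.map_d, hda, map_zero]⟩

theorem coe_mapZ (hf : IsMorphism f) (z : A.Z i) : (hf.mapZ i z : B.carrier) = f z :=
  rfl

theorem pr_mapZ_eq_zero (hf : IsMorphism f) {z : A.Z i} (hz : A.pr i z = 0) :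
    B.pr i (hf.mapZ i z) = 0 := by
  obtain ⟨a, ha, hda⟩ := pr_eq_zero_iff.1 hz
  exact pr_eq_zero_iff.2 ⟨f a, hf.map_mem _ a ha, by rw [← hf.map_d, hda, coe_mapZ]⟩

theorem exists_section_extending (hf : IsMorphism f) {φ : A.H i →ₗ[ℚ] B.H i}
    (hφ : ∀ z, φ (A.pr i z) = B.pr i (hf.mapZ i z)) (hφinj : Function.Injective φ)
    {α : A.H i →ₗ[ℚ] A.Z i} (hα : ∀ h, A.pr i (α h) = h) :
    ∃ β : B.H i →ₗ[ℚ] B.Z i, (∀ h, B.pr i (β h) = h) ∧ ∀ h, β (φ h) = hf.mapZ i (α h) := by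
  obtain ⟨β, hβ, hβφ⟩ := exists_lift_extending (Submodule.mkQ_surjective (B.Bdry i)) hφinj
    LinearMap.id (hf.mapZ i ∘ₗ α) (LinearMap.ext fun h => (hφ (α h)).symm.trans (by simp [hα]))
  exact ⟨β, LinearMap.congr_fun hβ, LinearMap.congr_fun hβφ⟩

theorem cochainSq_map (hf : IsMorphism f) (hi : Even i)
    {φ : V →ₗ[ℚ] W} {α : V →ₗ[ℚ] A.Z i} {β : W →ₗ[ℚ] B.Z i}
    (hβ : ∀ x, β (φ x) = hf.mapZ i (α x)) (u : SqM V) :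
    cochainSq hi β (SqM.map φ u) = hf.mapZ (i + i) (cochainSq hi α u) := by
  have hcomp : cochainSq hi β ∘ₗ SqM.map φ = hf.mapZ (i + i) ∘ₗ cochainSq hi α :=
    SqM.hom_ext fun x y => Subtype.ext <| by
      simp [coe_cochainSq_sqm, coe_mapZ, hβ]
  exact LinearMap.congr_fun hcomp u

theorem map_mem_ker_cup (hf : IsMorphism f) (hi : Even i) {φ : A.H i →ₗ[ℚ] B.H i}
    {α : A.H i →ₗ[ℚ] A.Z i} {β : B.H i →ₗ[ℚ] B.Z i} (hβ : ∀ h, β (φ h) = hf.mapZ i (α h))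
    {cupA : SqM (A.H i) →ₗ[ℚ] A.H (i + i)} (hcupA : cupA = A.pr (i + i) ∘ₗ cochainSq hi α)
    {cupB : SqM (B.H i) →ₗ[ℚ] B.H (i + i)} (hcupB : cupB = B.pr (i + i) ∘ₗ cochainSq hi β)
    (u : SqM (A.H i)) (hu : u ∈ LinearMap.ker cupA) : SqM.map φ u ∈ LinearMap.ker cupB := by
  subst hcupA hcupB
  rw [LinearMap.mem_ker, LinearMap.comp_apply, hf.cochainSq_map hi hβ]
  exact hf.pr_mapZ_eq_zero hu

theorem exists_primitive_cochainSq_extending (hf : IsMorphism f) (hi : Even i)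
    {φ : V →ₗ[ℚ] W} (hφ : Function.Injective φ)
    {α : V →ₗ[ℚ] A.Z i} {β : W →ₗ[ℚ] B.Z i} (hβ : ∀ x, β (φ x) = hf.mapZ i (α x))
    {E : Submodule ℚ (SqM V)} {E' : Submodule ℚ (SqM W)} (hE : ∀ e ∈ E, SqM.map φ e ∈ E')
    (hexact : ∀ e ∈ E', (cochainSq hi β e : B.carrier) ∈ (B.grading j).map B.d)
    {γ : E →ₗ[ℚ] A.carrier} (hγ : ∀ e, γ e ∈ A.grading j)
    (hdγ : ∀ e : E, A.d (γ e) = cochainSq hi α e) :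
    ∃ δ : E' →ₗ[ℚ] B.carrier, (∀ e, δ e ∈ B.grading j) ∧
      (∀ e : E', B.d (δ e) = cochainSq hi β e) ∧
      ∀ e, δ ((SqM.map φ).restrict hE e) = f (γ e) := by
  have hinj : Function.Injective ((SqM.map φ).restrict hE) := fun e e' h =>
    Subtype.ext (SqM.map_injective hφ (congrArg Subtype.val h))
  refine exists_primitive_extending B.d (B.grading j) hinj
    ((B.Z (i + i)).subtype ∘ₗ cochainSq hi β ∘ₗ E'.subtype) (fun e => hexact e e.2)
    (f.toLinearMap ∘ₗ γ) (fun e => hf.map_mem j _ (hγ e)) fun e => ?_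
  calc B.d (f (γ e)) = f (cochainSq hi α e) := by rw [← hf.map_d, hdγ]
    _ = cochainSq hi β (SqM.map φ e) := by rw [hf.cochainSq_map hi hβ, coe_mapZ]

end IsMorphism

end DGA

theorem P_natural_general (A B : DGA) (f : A.carrier →ₐ[ℚ] B.carrier)
    (hfd : ∀ a : A.carrier, f (A.d a) = B.d (f a))
    (hfgr : ∀ (i : ℕ) (a : A.carrier), a ∈ A.grading i → f a ∈ B.grading i)
    (f2 : A.H 2 →ₗ[ℚ] B.H 2)
    (hf2 : ∀ (x : A.Z 2) (y : B.Z 2),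
      (y : B.carrier) = f (x : A.carrier) → f2 (A.pr 2 x) = B.pr 2 y)
    (hf2inj : Function.Injective f2)
    (cupA : SqM (A.H 2) →ₗ[ℚ] A.H 4)
    (hcupA : ∀ (x y : A.Z 2) (w : A.Z 4),
      (w : A.carrier) = (x : A.carrier) * (y : A.carrier) →
      cupA (sqm (A.H 2) (A.pr 2 x) (A.pr 2 y)) = A.pr 4 w)
    (cupB : SqM (B.H 2) →ₗ[ℚ] B.H 4)
    (hcupB : ∀ (x y : B.Z 2) (w : B.Z 4),
      (w : B.carrier) = (x : B.carrier) * (y : B.carrier) →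
      cupB (sqm (B.H 2) (B.pr 2 x) (B.pr 2 y)) = B.pr 4 w)
    (mA : (A.H 2 ⊗[ℚ] AltM (SqM (A.H 2))) →ₗ[ℚ] (CubM (A.H 2) ⊗[ℚ] SqM (A.H 2)))
    (hmA : ∀ (q : A.H 2) (u v : SqM (A.H 2)),
      mA (q ⊗ₜ[ℚ] wdg (SqM (A.H 2)) u v)
        = mulC (A.H 2) q u ⊗ₜ[ℚ] v - mulC (A.H 2) q v ⊗ₜ[ℚ] u)
    (mB : (B.H 2 ⊗[ℚ] AltM (SqM (B.H 2))) →ₗ[ℚ] (CubM (B.H 2) ⊗[ℚ] SqM (B.H 2)))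
    (hmB : ∀ (q : B.H 2) (u v : SqM (B.H 2)),
      mB (q ⊗ₜ[ℚ] wdg (SqM (B.H 2)) u v)
        = mulC (B.H 2) q u ⊗ₜ[ℚ] v - mulC (B.H 2) q v ⊗ₜ[ℚ] u)
    (ιA : (A.H 2 ⊗[ℚ] AltM ↥(LinearMap.ker cupA)) →ₗ[ℚ] (A.H 2 ⊗[ℚ] AltM (SqM (A.H 2))))
    (hιA : ∀ (q : A.H 2) (e e' : ↥(LinearMap.ker cupA)),
      ιA (q ⊗ₜ[ℚ] wdg ↥(LinearMap.ker cupA) e e')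
        = q ⊗ₜ[ℚ] wdg (SqM (A.H 2)) (e : SqM (A.H 2)) (e' : SqM (A.H 2)))
    (ιB : (B.H 2 ⊗[ℚ] AltM ↥(LinearMap.ker cupB)) →ₗ[ℚ] (B.H 2 ⊗[ℚ] AltM (SqM (B.H 2))))
    (hιB : ∀ (q : B.H 2) (e e' : ↥(LinearMap.ker cupB)),
      ιB (q ⊗ₜ[ℚ] wdg ↥(LinearMap.ker cupB) e e')
        = q ⊗ₜ[ℚ] wdg (SqM (B.H 2)) (e : SqM (B.H 2)) (e' : SqM (B.H 2)))
    (F : (A.H 2 ⊗[ℚ] AltM (SqM (A.H 2))) →ₗ[ℚ] (B.H 2 ⊗[ℚ] AltM (SqM (B.H 2))))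
    (hF : ∀ q x y z w : A.H 2,
      F (q ⊗ₜ[ℚ] wdg (SqM (A.H 2)) (sqm (A.H 2) x y) (sqm (A.H 2) z w))
        = f2 q ⊗ₜ[ℚ] wdg (SqM (B.H 2)) (sqm (B.H 2) (f2 x) (f2 y))
            (sqm (B.H 2) (f2 z) (f2 w)))
    (αA : A.H 2 →ₗ[ℚ] A.Z 2) (hαA : ∀ h, A.pr 2 (αA h) = h)
    (αsqA : SqM (A.H 2) →ₗ[ℚ] A.Z 4)
    (hαsqA : ∀ (x y : A.H 2) (w : A.Z 4),
      (w : A.carrier) = (αA x : A.carrier) * (αA y : A.carrier) →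
      αsqA (sqm (A.H 2) x y) = w)
    (γA : ↥(LinearMap.ker cupA) →ₗ[ℚ] A.carrier)
    (hγAmem : ∀ e, γA e ∈ A.grading 3)
    (hγAd : ∀ e : ↥(LinearMap.ker cupA), A.d (γA e) = (αsqA (e : SqM (A.H 2)) : A.carrier))
    (ΦA : (A.H 2 ⊗[ℚ] AltM ↥(LinearMap.ker cupA)) →ₗ[ℚ] A.carrier)
    (hΦA : ∀ (q : A.H 2) (e e' : ↥(LinearMap.ker cupA)),
      ΦA (q ⊗ₜ[ℚ] wdg ↥(LinearMap.ker cupA) e e') = (αA q : A.carrier) * (γA e * γA e')) :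
    (∀ t, mA t = 0 → mB (F t) = 0) ∧ (∀ tA, F (ιA tA) ∈ LinearMap.range ιB) ∧
    ∃ (αB : B.H 2 →ₗ[ℚ] B.Z 2), (∀ h, B.pr 2 (αB h) = h) ∧
    ∃ αsqB : SqM (B.H 2) →ₗ[ℚ] B.Z 4,
      (∀ (x y : B.H 2) (w : B.Z 4),
        (w : B.carrier) = (αB x : B.carrier) * (αB y : B.carrier) →
        αsqB (sqm (B.H 2) x y) = w) ∧
    ∃ γB : ↥(LinearMap.ker cupB) →ₗ[ℚ] B.carrier,
      (∀ e, γB e ∈ B.grading 3) ∧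
      (∀ e : ↥(LinearMap.ker cupB), B.d (γB e) = (αsqB (e : SqM (B.H 2)) : B.carrier)) ∧
    ∃ ΦB : (B.H 2 ⊗[ℚ] AltM ↥(LinearMap.ker cupB)) →ₗ[ℚ] B.carrier,
      (∀ (q : B.H 2) (e e' : ↥(LinearMap.ker cupB)),
        ΦB (q ⊗ₜ[ℚ] wdg ↥(LinearMap.ker cupB) e e')
          = (αB q : B.carrier) * (γB e * γB e')) ∧
      ∀ tA tB, ιB tB = F (ιA tA) → f (ΦA tA) = ΦB tB := by
  have hf : DGA.IsMorphism f := ⟨hfd, hfgr⟩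
  have hγAsq : ∀ e, γA e * γA e = 0 := fun e =>
    DGA.mul_self_eq_zero_of_odd (by decide : Odd 3) (hγAmem e)
  have hF_eq := eq_tensorAltSqMap hF
  have hιA_eq := eq_tensorAltSubtype hιA
  have hιB_eq := eq_tensorAltSubtype hιB
  have hαsqA_eq := DGA.eq_cochainSq even_two hαsqA
  have hΦA_eq := eq_tensorAltMul (α := (A.Z 2).subtype ∘ₗ αA) hγAsq hΦA
  subst hF_eq hιA_eq hιB_eq hαsqA_eq hΦA_eq
  have hα_ext := hf.exists_section_extending (fun z => hf2 z (hf.mapZ 2 z) rfl) hf2inj hαA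
  obtain ⟨αB, hαB, hαBf⟩ := hα_ext
  have hcupA_eq := DGA.cup_eq_pr_comp_cochainSq even_two hcupA hαA
  have hcupB_eq := DGA.cup_eq_pr_comp_cochainSq even_two hcupB hαB
  have hE := hf.map_mem_ker_cup even_two hαBf hcupA_eq hcupB_eq
  have hexact : ∀ e ∈ LinearMap.ker cupB,
      (DGA.cochainSq even_two αB e : B.carrier) ∈ (B.grading 3).map B.d := fun e he =>
    DGA.pr_eq_zero_iff.1 ((LinearMap.congr_fun hcupB_eq e).symm.trans he)
  have hγ_ext := hf.exists_primitive_cochainSq_extending even_two hf2inj hαBf hE hexact hγAmem hγAd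
  obtain ⟨γB, hγBmem, hγBd, hγBf⟩ := hγ_ext
  have hγBsq : ∀ e, γB e * γB e = 0 := fun e =>
    DGA.mul_self_eq_zero_of_odd (by decide : Odd 3) (hγBmem e)
  have hιF := tensorAltSubtype_map_restrict hE
  refine ⟨fun t ht => ?_, fun tA => ⟨_, hιF tA⟩, αB, hαB, DGA.cochainSq even_two αB,
    fun x y w hw => Subtype.ext ((DGA.coe_cochainSq_sqm even_two αB x y).trans hw.symm),
    γB, hγBmem, hγBd, tensorAltMul ((B.Z 2).subtype ∘ₗ αB) γB hγBsq,
    tensorAltMul_tmul_wdg _ _ hγBsq, fun tA tB htB => ?_⟩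
  · rw [IsKoszulMap.natural hmA hmB, ht, map_zero]
  · have htB_eq := tensorAltSubtype_injective _ (htB.trans (hιF tA).symm)
    subst htB_eq
    exact (tensorAltMul_map (fun q => congrArg Subtype.val (hαBf q)) hγBf hγAsq hγBsq tA).symm

/-- **Proposition 2.8 (naturality of `𝒫`).** Let `f : A → B` be a morphism of DGAs over
`ℚ` inducing an isomorphism `H²(f)`. Then `H²(f) ⊗ Λ²(P²H²(f))` restricts to a map
`D_A → D_B`, and for every cochain choice `(α_A, γ_A)` on `A` there is a cochain choice
`(α_B, γ_B)` on `B` such that `H⁸(f) ∘ 𝒫_A = 𝒫_B ∘ (D_A → D_B)`, i.e. for every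
`t ∈ D_A` the element `f(α_Aγ_A²(t))` and the value of `α_Bγ_B²` on the image of `t`
differ by an exact element of `B`. -/
theorem P_natural (A B : DGA) (f : A.carrier →ₐ[ℚ] B.carrier)
    (hfd : ∀ a : A.carrier, f (A.d a) = B.d (f a))
    (hfgr : ∀ (i : ℕ) (a : A.carrier), a ∈ A.grading i → f a ∈ B.grading i)
    (f2 : A.H 2 →ₗ[ℚ] B.H 2)
    (hf2 : ∀ (x : A.Z 2) (y : B.Z 2),
      (y : B.carrier) = f (x : A.carrier) → f2 (A.pr 2 x) = B.pr 2 y)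
    (hf2bij : Function.Bijective f2)
    (cupA : SqM (A.H 2) →ₗ[ℚ] A.H 4)
    (hcupA : ∀ (x y : A.Z 2) (w : A.Z 4),
      (w : A.carrier) = (x : A.carrier) * (y : A.carrier) →
      cupA (sqm (A.H 2) (A.pr 2 x) (A.pr 2 y)) = A.pr 4 w)
    (cupB : SqM (B.H 2) →ₗ[ℚ] B.H 4)
    (hcupB : ∀ (x y : B.Z 2) (w : B.Z 4),
      (w : B.carrier) = (x : B.carrier) * (y : B.carrier) →
      cupB (sqm (B.H 2) (B.pr 2 x) (B.pr 2 y)) = B.pr 4 w)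
    (mA : (A.H 2 ⊗[ℚ] AltM (SqM (A.H 2))) →ₗ[ℚ] (CubM (A.H 2) ⊗[ℚ] SqM (A.H 2)))
    (hmA : ∀ (q : A.H 2) (u v : SqM (A.H 2)),
      mA (q ⊗ₜ[ℚ] wdg (SqM (A.H 2)) u v)
        = mulC (A.H 2) q u ⊗ₜ[ℚ] v - mulC (A.H 2) q v ⊗ₜ[ℚ] u)
    (mB : (B.H 2 ⊗[ℚ] AltM (SqM (B.H 2))) →ₗ[ℚ] (CubM (B.H 2) ⊗[ℚ] SqM (B.H 2)))
    (hmB : ∀ (q : B.H 2) (u v : SqM (B.H 2)),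
      mB (q ⊗ₜ[ℚ] wdg (SqM (B.H 2)) u v)
        = mulC (B.H 2) q u ⊗ₜ[ℚ] v - mulC (B.H 2) q v ⊗ₜ[ℚ] u)
    (ιA : (A.H 2 ⊗[ℚ] AltM ↥(LinearMap.ker cupA)) →ₗ[ℚ] (A.H 2 ⊗[ℚ] AltM (SqM (A.H 2))))
    (hιA : ∀ (q : A.H 2) (e e' : ↥(LinearMap.ker cupA)),
      ιA (q ⊗ₜ[ℚ] wdg ↥(LinearMap.ker cupA) e e')
        = q ⊗ₜ[ℚ] wdg (SqM (A.H 2)) (e : SqM (A.H 2)) (e' : SqM (A.H 2)))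
    (ιB : (B.H 2 ⊗[ℚ] AltM ↥(LinearMap.ker cupB)) →ₗ[ℚ] (B.H 2 ⊗[ℚ] AltM (SqM (B.H 2))))
    (hιB : ∀ (q : B.H 2) (e e' : ↥(LinearMap.ker cupB)),
      ιB (q ⊗ₜ[ℚ] wdg ↥(LinearMap.ker cupB) e e')
        = q ⊗ₜ[ℚ] wdg (SqM (B.H 2)) (e : SqM (B.H 2)) (e' : SqM (B.H 2)))
    (F : (A.H 2 ⊗[ℚ] AltM (SqM (A.H 2))) →ₗ[ℚ] (B.H 2 ⊗[ℚ] AltM (SqM (B.H 2))))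
    (hF : ∀ q x y z w : A.H 2,
      F (q ⊗ₜ[ℚ] wdg (SqM (A.H 2)) (sqm (A.H 2) x y) (sqm (A.H 2) z w))
        = f2 q ⊗ₜ[ℚ] wdg (SqM (B.H 2)) (sqm (B.H 2) (f2 x) (f2 y))
            (sqm (B.H 2) (f2 z) (f2 w)))
    (αA : A.H 2 →ₗ[ℚ] A.Z 2) (hαA : ∀ h, A.pr 2 (αA h) = h)
    (αsqA : SqM (A.H 2) →ₗ[ℚ] A.Z 4)
    (hαsqA : ∀ (x y : A.H 2) (w : A.Z 4),
      (w : A.carrier) = (αA x : A.carrier) * (αA y : A.carrier) →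
      αsqA (sqm (A.H 2) x y) = w)
    (γA : ↥(LinearMap.ker cupA) →ₗ[ℚ] A.carrier)
    (hγAmem : ∀ e, γA e ∈ A.grading 3)
    (hγAd : ∀ e : ↥(LinearMap.ker cupA), A.d (γA e) = (αsqA (e : SqM (A.H 2)) : A.carrier))
    (ΦA : (A.H 2 ⊗[ℚ] AltM ↥(LinearMap.ker cupA)) →ₗ[ℚ] A.carrier)
    (hΦA : ∀ (q : A.H 2) (e e' : ↥(LinearMap.ker cupA)),
      ΦA (q ⊗ₜ[ℚ] wdg ↥(LinearMap.ker cupA) e e') = (αA q : A.carrier) * (γA e * γA e')) :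
    (∀ tA : A.H 2 ⊗[ℚ] AltM ↥(LinearMap.ker cupA), mA (ιA tA) = 0 →
      mB (F (ιA tA)) = 0 ∧ F (ιA tA) ∈ LinearMap.range ιB) ∧
    ∃ (αB : B.H 2 →ₗ[ℚ] B.Z 2), (∀ h, B.pr 2 (αB h) = h) ∧
    ∃ αsqB : SqM (B.H 2) →ₗ[ℚ] B.Z 4,
      (∀ (x y : B.H 2) (w : B.Z 4),
        (w : B.carrier) = (αB x : B.carrier) * (αB y : B.carrier) →
        αsqB (sqm (B.H 2) x y) = w) ∧
    ∃ γB : ↥(LinearMap.ker cupB) →ₗ[ℚ] B.carrier,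
      (∀ e, γB e ∈ B.grading 3) ∧
      (∀ e : ↥(LinearMap.ker cupB), B.d (γB e) = (αsqB (e : SqM (B.H 2)) : B.carrier)) ∧
    ∃ ΦB : (B.H 2 ⊗[ℚ] AltM ↥(LinearMap.ker cupB)) →ₗ[ℚ] B.carrier,
      (∀ (q : B.H 2) (e e' : ↥(LinearMap.ker cupB)),
        ΦB (q ⊗ₜ[ℚ] wdg ↥(LinearMap.ker cupB) e e')
          = (αB q : B.carrier) * (γB e * γB e')) ∧
      ∀ (tA : A.H 2 ⊗[ℚ] AltM ↥(LinearMap.ker cupA))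
        (tB : B.H 2 ⊗[ℚ] AltM ↥(LinearMap.ker cupB)),
        mA (ιA tA) = 0 → ιB tB = F (ιA tA) →
        f (ΦA tA) - ΦB tB ∈ Submodule.map B.d (B.grading 7) := by
  have key := P_natural_general A B f hfd hfgr f2 hf2 hf2bij.injective cupA hcupA cupB hcupB
    mA hmA mB hmB ιA hιA ιB hιB F hF αA hαA αsqA hαsqA γA hγAmem hγAd ΦA hΦA
  obtain ⟨hm, hrange, αB, hαB, αsqB, hαsqB, γB, hγBmem, hγBd, ΦB, hΦB, hΦ⟩ := key
  exact ⟨fun tA htA => ⟨hm _ htA, hrange tA⟩, αB, hαB, αsqB, hαsqB, γB, hγBmem, hγBd, ΦB, hΦB,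
    fun tA tB _ h => (sub_eq_zero.2 (hΦ tA tB h)).symm ▸ zero_mem _⟩

end
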